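/- arXiv:nlin/0603044 — 2 statements merged into one kernel-verified Lean document; each statement's English description precedes it below -/
import Mathlib

section
/- For every integer n ≥ 1, the fifteenth power sum of the roots of the Yablonskii–Vorob'ev polynomial Q_n equals s_{n,15} = −8 n (n² − 1)(n + 2)(91n⁸ + 364n⁷ − 3468n⁶ − 11678n⁵ + 57138n⁴ + 134164n³ − 454161n² − 523250n + 1401400). -/
/-!
Reverse the polynomials: with `w = 1/z` and `d = deg Q n`, put
`R n (w) = w ^ d * Q n (1/w) = ∏ (1 - a w)`, the product over the roots `a` of `Q n`. The generating
series `S n = ∑ s_{n,m} w ^ m` is then `z Q' / Q`, so that `w R' = R (d - S)`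
(`euler_rev`), and the recurrence for `Q` becomes (`reverse_recurrence`)
`R (n+2) * R n = R (n+1) ^ 2 * (1 + 4 w ^ 3 (w S' + S))` with `S = S (n+1)`. Taking logarithmic
derivatives, the products disappear (`toda_mul_secondDiff`):
`U * (1 - (S (n+2) - 2 S (n+1) + S n)) = w U'`, where `U = 1 + 4 w ^ 3 (w S' + S)` is `toda S`.
Comparing coefficients gives the second difference in `n` of `s_{n,m+3}` in terms of the `s_{n,j}`
with `j ≤ m` and their second differences (`coeff_of_toda`, `powerSumRecurrence`). Hence
`s_{n,m} = 0` unless `3 ∣ m`, and, since a sequence is determined by its second differences and two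
initial values, `s_{n,3}`, `s_{n,6}`, `s_{n,9}`, `s_{n,12}` and `s_{n,15}` are successively found to
be explicit polynomials in `n`.
-/

open Polynomial

/-- The `m`-th power sum `s_{n,m}` of the complex roots (with multiplicity)
of the polynomial `Q n`. -/
noncomputable def powerSum (Q : ℕ → Polynomial ℚ) (n m : ℕ) : ℂ :=
  (((Q n).map (algebraMap ℚ ℂ)).roots.map (· ^ m)).sum

/-! ### Degrees -/

/-- Degree of the `n`-th Yablonskii–Vorob'ev polynomial, as the sum `0 + 1 + ⋯ + n`. -/
def yvDegree (n : ℕ) : ℕ := ∑ i ∈ Finset.range (n + 1), i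

lemma yvDegree_succ (n : ℕ) : yvDegree (n + 1) = yvDegree n + (n + 1) :=
  Finset.sum_range_succ _ _

lemma isMonicOfDegree_yv (Q : ℕ → Polynomial ℂ)
    (hQ0 : Q 0 = 1) (hQ1 : Q 1 = X)
    (hQrec : ∀ n : ℕ, Q (n + 2) * Q n =
      X * (Q (n + 1)) ^ 2 -
        4 * (Q (n + 1) * derivative (derivative (Q (n + 1))) -
              (derivative (Q (n + 1))) ^ 2)) (n : ℕ) :
    IsMonicOfDegree (Q n) (yvDegree n) ∧ IsMonicOfDegree (Q (n + 1)) (yvDegree (n + 1)) := by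
  induction n with
  | zero =>
    refine ⟨?_, ?_⟩
    · rw [hQ0]; exact isMonicOfDegree_zero_iff.2 rfl
    · rw [zero_add, hQ1]; exact isMonicOfDegree_X ℂ
  | succ n ih =>
    obtain ⟨h0, h1⟩ := ih
    refine ⟨h1, h0.of_mul_right (m := yvDegree (n + 2)) ?_⟩
    rw [hQrec]
    have hd : yvDegree (n + 2) + yvDegree n = 1 + yvDegree (n + 1) * 2 := by
      have := yvDegree_succ n
      have : yvDegree (n + 2) = yvDegree (n + 1) + (n + 2) := yvDegree_succ (n + 1)
      omega
    rw [hd]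
    refine ((isMonicOfDegree_X ℂ).mul (h1.pow 2)).sub ?_
    have e0 := h1.natDegree_eq
    have e1 := natDegree_derivative_le (Q (n + 1))
    have e2 := natDegree_derivative_le (derivative (Q (n + 1)))
    have e3 : (Q (n + 1) * derivative (derivative (Q (n + 1)))).natDegree
        ≤ yvDegree (n + 1) * 2 := natDegree_mul_le.trans (by omega)
    have e4 : ((derivative (Q (n + 1))) ^ 2).natDegree ≤ yvDegree (n + 1) * 2 :=
      natDegree_pow_le.trans (by omega)
    have e5 : (4 * (Q (n + 1) * derivative (derivative (Q (n + 1))) -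
        (derivative (Q (n + 1))) ^ 2)).natDegree ≤ yvDegree (n + 1) * 2 := by
      refine natDegree_mul_le.trans ?_
      have : natDegree (4 : ℂ[X]) = 0 := natDegree_ofNat 4
      have := natDegree_sub_le_of_le e3 e4
      simp only [max_self] at this
      omega
    omega

/-! ### Reversed polynomials and the generating series of the power sums -/

/-- The power series `w ^ N * A (1/w)`, for a polynomial `A` of degree at most `N`. -/
noncomputable def rev (N : ℕ) (A : ℂ[X]) : PowerSeries ℂ := (reflect N A : ℂ[X])

/-- The generating series `∑ m, s_m X ^ m` of the power sums of a multiset. -/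
noncomputable def powerSumSeries (M : Multiset ℂ) : PowerSeries ℂ :=
  PowerSeries.mk fun m => (M.map (· ^ m)).sum

/-- The derivation `w d/dw` of power series. -/
noncomputable def euler (A : PowerSeries ℂ) : PowerSeries ℂ :=
  PowerSeries.X * PowerSeries.derivative ℂ A

lemma euler_mul (A B : PowerSeries ℂ) : euler (A * B) = euler A * B + A * euler B := by
  simp only [euler, Derivation.leibniz, smul_eq_mul]; ring

lemma coeff_euler (A : PowerSeries ℂ) (n : ℕ) :
    PowerSeries.coeff n (euler A) = n * PowerSeries.coeff n A := by
  cases n with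
  | zero => simp [euler]
  | succ n => simp [euler, PowerSeries.coeff_succ_X_mul, PowerSeries.coeff_derivative, mul_comm]

lemma rev_sub (N : ℕ) (A B : ℂ[X]) : rev N (A - B) = rev N A - rev N B := by
  simp [rev, reflect_sub]

lemma rev_mul {M N : ℕ} {A B : ℂ[X]} (hA : A.natDegree ≤ M) (hB : B.natDegree ≤ N) :
    rev (M + N) (A * B) = rev M A * rev N B := by
  simp [rev, reflect_mul A B hA hB]

/-- Under `w = 1/z`, the operator `z d/dz` becomes `-w d/dw`, shifted by the degree bound. -/
lemma rev_X_mul_derivative {N : ℕ} {A : ℂ[X]} (hA : A.natDegree ≤ N) :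
    rev N (X * derivative A) = N * rev N A - euler (rev N A) := by
  have hc : ∀ k, (X * derivative A).coeff k = k * A.coeff k := by
    intro k
    cases k with
    | zero => simp
    | succ k => rw [coeff_X_mul, coeff_derivative]; push_cast; ring
  ext i
  have hN : PowerSeries.coeff i ((N : PowerSeries ℂ) * rev N A)
      = N * PowerSeries.coeff i (rev N A) := by
    rw [← nsmul_eq_mul, map_nsmul, nsmul_eq_mul]
  rw [map_sub, hN, coeff_euler]
  simp only [rev, coeff_coe, coeff_reflect, hc]
  rcases le_or_gt i N with h | h
  · rw [revAt_le h]; push_cast [h]; ring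
  · rw [revAt_eq_self_of_lt h, coeff_eq_zero_of_natDegree_lt (hA.trans_lt h)]; ring

lemma powerSumSeries_cons (a : ℂ) (M : Multiset ℂ) :
    powerSumSeries (a ::ₘ M) = PowerSeries.mk (fun m => a ^ m) + powerSumSeries M := by
  ext; simp [powerSumSeries]

lemma one_sub_mul_mk_pow (a : ℂ) :
    (1 - PowerSeries.C a * PowerSeries.X) * PowerSeries.mk (fun m => a ^ m) = 1 := by
  ext n
  cases n with
  | zero => simp [sub_mul, mul_assoc]
  | succ n =>
    simp [sub_mul, mul_assoc, PowerSeries.coeff_succ_X_mul, PowerSeries.coeff_one, pow_succ']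

/-- The logarithmic derivative of a reversed product of linear factors. -/
lemma euler_rev_prod (M : Multiset ℂ) :
    euler (rev M.card (M.map fun a => X - C a).prod)
      = rev M.card (M.map fun a => X - C a).prod * (M.card - powerSumSeries M) := by
  induction M using Multiset.induction with
  | empty =>
    have : powerSumSeries 0 = 0 := by ext; simp [powerSumSeries]
    simp [rev, euler, this]
  | cons a M ih =>
    have hM : (M.map fun a => X - C a).prod.natDegree ≤ M.card := by simp
    have hl : rev 1 (X - C a) = 1 - PowerSeries.C a * PowerSeries.X := by
      simp [rev, reflect_C]
    have hr : rev (a ::ₘ M).card ((a ::ₘ M).map fun a => X - C a).prod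
        = (1 - PowerSeries.C a * PowerSeries.X) * rev M.card (M.map fun a => X - C a).prod := by
      rw [Multiset.map_cons, Multiset.prod_cons, Multiset.card_cons, add_comm,
        rev_mul (by simp) hM, hl]
    have he : euler (1 - PowerSeries.C a * PowerSeries.X) = - (PowerSeries.C a * PowerSeries.X) := by
      simp [euler, Derivation.leibniz]; ring
    rw [hr, euler_mul, ih, he, powerSumSeries_cons, Multiset.card_cons]
    have hg := one_sub_mul_mk_pow a
    push_cast
    linear_combination (rev M.card (M.map fun a => X - C a).prod) * hg

/-- The logarithmic derivative of a reversed monic polynomial: `w R' / R = d - S`. -/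
lemma euler_rev {p : ℂ[X]} {d : ℕ} (hp : IsMonicOfDegree p d) :
    euler (rev d p) = rev d p * (d - powerSumSeries p.roots) := by
  have hs := IsAlgClosed.splits p
  have hc : p.roots.card = d := by rw [← hs.natDegree_eq_card_roots, hp.natDegree_eq]
  have h := euler_rev_prod p.roots
  rwa [← hs.eq_prod_roots_of_monic hp.monic, hc] at h

/-! ### The recurrence for the generating series -/

/-- The series `1 + 4 w ^ 3 (w S' + S)`, the quotient `Q (n+2) * Q n / (z * Q (n+1) ^ 2)` in the
variable `w = 1/z`, where `S` is the generating series for `Q (n+1)`. -/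
noncomputable def toda (S : PowerSeries ℂ) : PowerSeries ℂ :=
  1 + PowerSeries.X ^ 3 * (4 * (euler S + S))

lemma reverse_recurrence {q₀ q₁ q₂ : ℂ[X]} {d₀ d₁ d₂ : ℕ}
    (h0 : IsMonicOfDegree q₀ d₀) (h1 : IsMonicOfDegree q₁ d₁) (h2 : IsMonicOfDegree q₂ d₂)
    (hd : d₂ + d₀ = 2 * d₁ + 1)
    (h : q₂ * q₀ = X * q₁ ^ 2 - 4 * (q₁ * derivative (derivative q₁) - (derivative q₁) ^ 2)) :
    rev d₂ q₂ * rev d₀ q₀ = rev d₁ q₁ ^ 2 * toda (powerSumSeries q₁.roots) := by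
  set S := powerSumSeries q₁.roots
  set R := rev d₁ q₁ with hR
  have hθ : euler R = R * (d₁ - S) := euler_rev h1
  have n0 : q₁.natDegree ≤ d₁ := h1.natDegree_eq.le
  -- In terms of `E = z d/dz` one has `z ^ 2 Q'' = E (E Q) - E Q`, and `E` preserves degree bounds.
  have hE : ∀ A : ℂ[X], A.natDegree ≤ d₁ → (X * derivative A).natDegree ≤ d₁ := by
    intro A hA
    rw [natDegree_le_iff_coeff_eq_zero] at hA ⊢
    intro k hk
    cases k with
    | zero => simp
    | succ k => rw [coeff_X_mul, coeff_derivative, hA _ hk, zero_mul]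
  set E₁ := X * derivative q₁ with hE₁
  set E₂ := X * derivative E₁ with hE₂
  have n1 : E₁.natDegree ≤ d₁ := hE _ n0
  have n2 : E₂.natDegree ≤ d₁ := hE _ n1
  have r1 : rev d₁ E₁ = R * S := by
    rw [hE₁, rev_X_mul_derivative n0, ← hR, hθ]; ring
  have r2 : rev d₁ E₂ = R * S ^ 2 - R * euler S := by
    rw [hE₂, rev_X_mul_derivative n1, r1, euler_mul, hθ]; ring
  have key : X ^ 2 * (q₂ * q₀)
      = X ^ 3 * (q₁ * q₁) - C 4 * (q₁ * E₂ - q₁ * E₁ - E₁ * E₁) := by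
    have : derivative E₁ = derivative q₁ + X * derivative (derivative q₁) := by
      simp [hE₁, derivative_mul]
    rw [h, hE₂, this, hE₁, show (C 4 : ℂ[X]) = 4 from rfl]; ring
  have m1 : rev (d₁ + d₁) (q₁ * E₂ - q₁ * E₁ - E₁ * E₁) = - R ^ 2 * (euler S + S) := by
    rw [rev_sub, rev_sub, rev_mul n0 n2, rev_mul n0 n1, rev_mul n1 n1, r1, r2, ← hR]; ring
  have m2 : (q₁ * E₂ - q₁ * E₁ - E₁ * E₁).natDegree ≤ d₁ + d₁ :=
    (natDegree_sub_le_of_le (natDegree_sub_le_of_le (natDegree_mul_le_of_le n0 n2)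
      (natDegree_mul_le_of_le n0 n1)) (natDegree_mul_le_of_le n1 n1)).trans (by simp)
  have k2 := congrArg (rev (3 + (d₁ + d₁))) key
  have hX : ∀ k : ℕ, rev k (X ^ k) = 1 := by intro k; simp [rev, reflect_monomial, revAt_le]
  have hC : rev 3 (C 4) = 4 * PowerSeries.X ^ 3 := by
    simp only [rev, reflect_C, coe_mul, coe_C, coe_pow, coe_X]; rfl
  rw [rev_sub, rev_mul (by simp) (natDegree_mul_le_of_le n0 n0), rev_mul n0 n0,
    rev_mul (by simp) m2, m1, hX, hC, show 3 + (d₁ + d₁) = 2 + (d₂ + d₀) by omega,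
    rev_mul (by simp) (natDegree_mul_le_of_le h2.natDegree_eq.le h0.natDegree_eq.le),
    rev_mul h2.natDegree_eq.le h0.natDegree_eq.le, hX, ← hR] at k2
  rw [toda]
  linear_combination k2

lemma rev_ne_zero {p : ℂ[X]} {d : ℕ} (hp : IsMonicOfDegree p d) : rev d p ≠ 0 := by
  simp [rev, hp.ne_zero]

/-- The logarithmic derivative of `reverse_recurrence`. -/
lemma toda_mul_secondDiff {q₀ q₁ q₂ : ℂ[X]} {d₀ d₁ d₂ : ℕ}
    (h0 : IsMonicOfDegree q₀ d₀) (h1 : IsMonicOfDegree q₁ d₁) (h2 : IsMonicOfDegree q₂ d₂)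
    (hd : d₂ + d₀ = 2 * d₁ + 1)
    (h : q₂ * q₀ = X * q₁ ^ 2 - 4 * (q₁ * derivative (derivative q₁) - (derivative q₁) ^ 2)) :
    toda (powerSumSeries q₁.roots) * (1 - (powerSumSeries q₂.roots - 2 * powerSumSeries q₁.roots
      + powerSumSeries q₀.roots)) = euler (toda (powerSumSeries q₁.roots)) := by
  have hr := reverse_recurrence h0 h1 h2 hd h
  have he := congrArg euler hr
  have hdc : (d₂ : PowerSeries ℂ) + d₀ = 2 * d₁ + 1 := by
    exact_mod_cast congrArg (Nat.cast : ℕ → PowerSeries ℂ) hd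
  rw [euler_mul, euler_mul, pow_two, euler_mul, euler_rev h0,
    euler_rev h1, euler_rev h2] at he
  refine mul_left_cancel₀ (pow_ne_zero 2 (rev_ne_zero h1)) ?_
  linear_combination he - (d₂ + d₀ - powerSumSeries q₂.roots - powerSumSeries q₀.roots) * hr
    - rev d₁ q₁ ^ 2 * toda (powerSumSeries q₁.roots) * hdc

/-! ### Coefficients -/

/-- The coefficients of `toda S * (1 - T) = euler (toda S)`; in particular the series `1 - T`
vanishes in degrees `0, 1, 2`. -/
lemma coeff_of_toda {S T : PowerSeries ℂ} (h : toda S * (1 - T) = euler (toda S)) :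
    PowerSeries.coeff 0 T = 1 ∧ PowerSeries.coeff 1 T = 0 ∧ PowerSeries.coeff 2 T = 0 ∧
    ∀ m, PowerSeries.coeff (m + 3) T = -4 * (m + 3) * (m + 1) * PowerSeries.coeff m S
      - 4 * ∑ x ∈ Finset.HasAntidiagonal.antidiagonal m, (x.1 + 1) * PowerSeries.coeff x.1 S *
        PowerSeries.coeff x.2 (T - 1) := by
  have h' : 1 - T + PowerSeries.X ^ 3 * (4 * (euler S + S) * (1 - T)) = euler (toda S) := by
    rw [← h, toda]; ring
  have h4 : ∀ k (A : PowerSeries ℂ), PowerSeries.coeff k (4 * A) = 4 * PowerSeries.coeff k A := by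
    intro k A
    rw [show (4 : PowerSeries ℂ) = PowerSeries.C 4 from rfl, PowerSeries.coeff_C_mul]
  have c := fun k => congrArg (PowerSeries.coeff k) h'
  simp only [coeff_euler, toda, map_add, map_sub, PowerSeries.coeff_X_pow_mul',
    PowerSeries.coeff_one] at c
  refine ⟨?_, ?_, ?_, fun m => ?_⟩
  · have := c 0; norm_num at this; rw [PowerSeries.coeff_zero_eq_constantCoeff_apply]
    linear_combination -this
  · have := c 1; norm_num at this; linear_combination this
  · have := c 2; norm_num at this; linear_combination this
  · have hm := c (m + 3)
    simp only [Nat.le_add_left, if_true, Nat.add_sub_cancel, mul_assoc, h4,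
      map_add, coeff_euler, Nat.add_eq_zero_iff, OfNat.ofNat_ne_zero, and_false, if_false] at hm
    rw [PowerSeries.coeff_mul] at hm
    have hs : ∑ x ∈ Finset.HasAntidiagonal.antidiagonal m, ((x.1 : ℂ) + 1) * PowerSeries.coeff x.1 S *
        PowerSeries.coeff x.2 (T - 1) = - ∑ x ∈ Finset.HasAntidiagonal.antidiagonal m,
          PowerSeries.coeff x.1 (euler S + S) * PowerSeries.coeff x.2 (1 - T) := by
      rw [← Finset.sum_neg_distrib]
      refine Finset.sum_congr rfl fun x _ => ?_
      simp only [map_add, map_sub, coeff_euler]; ring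
    rw [hs]
    push_cast at hm
    linear_combination -hm

/-- The recurrence in `n` satisfied by the power sums, for an abstract array `s n m`. The term
`if k = 0 then 1 else 0` is the second difference in `n` of the degree `s n 0`. -/
structure PowerSumRecurrence (s : ℕ → ℕ → ℂ) : Prop where
  zero : ∀ m, s 0 m = 0
  one : ∀ m, s 1 m = if m = 0 then 1 else 0
  diff_zero : ∀ n, s (n + 2) 0 - 2 * s (n + 1) 0 + s n 0 = 1
  diff_one : ∀ n, s (n + 2) 1 - 2 * s (n + 1) 1 + s n 1 = 0
  diff_two : ∀ n, s (n + 2) 2 - 2 * s (n + 1) 2 + s n 2 = 0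
  diff : ∀ n m, s (n + 2) (m + 3) - 2 * s (n + 1) (m + 3) + s n (m + 3) =
    -4 * (m + 3) * (m + 1) * s (n + 1) m
      - 4 * ∑ x ∈ Finset.HasAntidiagonal.antidiagonal m, (x.1 + 1) * s (n + 1) x.1 *
        (s (n + 2) x.2 - 2 * s (n + 1) x.2 + s n x.2 - if x.2 = 0 then 1 else 0)

lemma powerSumRecurrence (Q : ℕ → Polynomial ℂ)
    (hQ0 : Q 0 = 1) (hQ1 : Q 1 = X)
    (hQrec : ∀ n : ℕ, Q (n + 2) * Q n =
      X * (Q (n + 1)) ^ 2 -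
        4 * (Q (n + 1) * derivative (derivative (Q (n + 1))) -
              (derivative (Q (n + 1))) ^ 2)) :
    PowerSumRecurrence fun n m => PowerSeries.coeff m (powerSumSeries (Q n).roots) := by
  have hdeg := fun n => (isMonicOfDegree_yv Q hQ0 hQ1 hQrec n).1
  have hd : ∀ n, yvDegree (n + 2) + yvDegree n = 2 * yvDegree (n + 1) + 1 := by
    intro n
    have := yvDegree_succ n
    have : yvDegree (n + 2) = yvDegree (n + 1) + (n + 2) := yvDegree_succ (n + 1)
    omega
  have hc := fun n => coeff_of_toda
    (toda_mul_secondDiff (hdeg n) (hdeg (n + 1)) (hdeg (n + 2)) (hd n) (hQrec n))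
  have h2 : ∀ k (A : PowerSeries ℂ), PowerSeries.coeff k (2 * A) = 2 * PowerSeries.coeff k A := by
    intro k A
    rw [show (2 : PowerSeries ℂ) = PowerSeries.C 2 from rfl, PowerSeries.coeff_C_mul]
  simp only [map_add, map_sub, h2, PowerSeries.coeff_one] at hc
  refine ⟨fun m => ?_, fun m => ?_, fun n => (hc n).1, fun n => (hc n).2.1,
    fun n => (hc n).2.2.1, fun n m => (hc n).2.2.2 m⟩
  · simp [hQ0, powerSumSeries]
  · simp [hQ1, powerSumSeries, zero_pow_eq]

/-! ### Solving the recurrence -/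

lemma eq_of_secondDiff {u f : ℕ → ℂ} (h0 : u 0 = f 0) (h1 : u 1 = f 1)
    (h : ∀ n, u (n + 2) - 2 * u (n + 1) + u n = f (n + 2) - 2 * f (n + 1) + f n) (n : ℕ) :
    u n = f n := by
  suffices u n = f n ∧ u (n + 1) = f (n + 1) from this.1
  induction n with
  | zero => exact ⟨h0, h1⟩
  | succ n ih => exact ⟨ih.2, by linear_combination h n + 2 * ih.2 - ih.1⟩

namespace PowerSumRecurrence

variable {s : ℕ → ℕ → ℂ}

/-- The roots are invariant under multiplication by cube roots of unity, so that only power sums of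
exponent divisible by `3` survive; here this is read off from the recurrence. -/
lemma eq_zero (hs : PowerSumRecurrence s) (m : ℕ) (hm : m % 3 ≠ 0) (n : ℕ) : s n m = 0 := by
  have hm0 : m ≠ 0 := by rintro rfl; simp at hm
  refine eq_of_secondDiff (u := fun n => s n m) (f := fun _ => 0) (hs.zero m)
    ((hs.one m).trans (if_neg hm0)) (fun n => ?_) n
  simp only [mul_zero, sub_zero, add_zero]
  match m, hm with
  | 1, _ => exact hs.diff_one n
  | 2, _ => exact hs.diff_two n
  | m + 3, hm =>
    have hm' : m % 3 ≠ 0 := by omega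
    rw [hs.diff, eq_zero hs m hm' (n + 1), Finset.sum_eq_zero, mul_zero, mul_zero, sub_zero]
    rintro ⟨j, k⟩ hjk
    rw [Finset.HasAntidiagonal.mem_antidiagonal] at hjk
    simp only at hjk ⊢
    have hjm : j ≤ m + 2 := by omega
    have hkm : k ≤ m + 2 := by omega
    by_cases hj : j % 3 = 0
    · have hk : k % 3 ≠ 0 := by omega
      have hk0 : k ≠ 0 := by rintro rfl; simp at hk
      rw [eq_zero hs k hk, eq_zero hs k hk, eq_zero hs k hk, if_neg hk0]; ring
    · rw [eq_zero hs j hj]; ring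
termination_by m

/-- Each of `s n 0`, `s n 3`, …, `s n 15` has a second difference in `n` given by the earlier ones, and
the claimed polynomial has the same second difference and the same values at `n = 0, 1`. -/
lemma fifteen (hs : PowerSumRecurrence s) (n : ℕ) : s n 15 =
    -8 * n * (n ^ 2 - 1) * (n + 2) * (91 * n ^ 8 + 364 * n ^ 7 - 3468 * n ^ 6 - 11678 * n ^ 5
      + 57138 * n ^ 4 + 134164 * n ^ 3 - 454161 * n ^ 2 - 523250 * n + 1401400) := by
  have z := hs.eq_zero
  have d0 := hs.diff_zero
  have d3 := fun n => hs.diff n 0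
  have d6 := fun n => hs.diff n 3
  have d9 := fun n => hs.diff n 6
  have d12 := fun n => hs.diff n 9
  have d15 := fun n => hs.diff n 12
  simp [Finset.Nat.sum_antidiagonal_eq_sum_range_succ_mk, Finset.sum_range_succ, z, d0]
    at d3 d6 d9 d12 d15
  have s0 : ∀ n, s n 0 = n * (n + 1) / 2 := by
    refine eq_of_secondDiff (by simp [hs.zero]) (by simp [hs.one]) fun n => ?_
    rw [d0]; push_cast; ring
  simp only [s0] at d3 d6 d9 d12 d15
  have s3 : ∀ n, s n 3 = -(n * (n ^ 2 - 1) * (n + 2) / 2) := by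
    refine eq_of_secondDiff (by simp [hs.zero]) (by simp [hs.one]) fun n => ?_
    rw [d3]; push_cast; ring
  simp only [s3] at d6 d9 d12 d15
  have s6 : ∀ n, s n 6 = n * (n ^ 2 - 1) * (n + 2) * (2 * n ^ 2 + 2 * n - 10) := by
    refine eq_of_secondDiff (by simp [hs.zero]) (by simp [hs.one]) fun n => ?_
    rw [d6]; push_cast; ring
  simp only [s6] at d9 d12 d15
  have s9 : ∀ n, s n 9 = n * (n ^ 2 - 1) * (n + 2) *
      (-12 * n ^ 4 - 24 * n ^ 3 + 152 * n ^ 2 + 164 * n - 560) := by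
    refine eq_of_secondDiff (by simp [hs.zero]) (by simp [hs.one]) fun n => ?_
    rw [d9]; push_cast; ring
  simp only [s9] at d12 d15
  have s12 : ∀ n, s n 12 = n * (n ^ 2 - 1) * (n + 2) *
      (88 * n ^ 6 + 264 * n ^ 5 - 2072 * n ^ 4 - 4584 * n ^ 3 + 18784 * n ^ 2 + 21120 * n
        - 61600) := by
    refine eq_of_secondDiff (by simp [hs.zero]) (by simp [hs.one]) fun n => ?_
    rw [d12]; push_cast; ring
  simp only [s12] at d15
  revert n
  refine eq_of_secondDiff (by simp [hs.zero]) (by simp [hs.one]) fun n => ?_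
  rw [d15]; push_cast; ring

end PowerSumRecurrence

/-- Explicit formula for the power sum `s_{n,15}` of the roots of the
Yablonskii–Vorob'ev polynomial `Q n`. -/
theorem powerSum_fifteen
    (Q : ℕ → Polynomial ℚ)
    (hQ0 : Q 0 = 1) (hQ1 : Q 1 = X)
    (hQrec : ∀ n : ℕ, Q (n + 2) * Q n =
      X * (Q (n + 1)) ^ 2 -
        4 * (Q (n + 1) * derivative (derivative (Q (n + 1))) -
              (derivative (Q (n + 1))) ^ 2)) :
    ∀ n : ℕ, 1 ≤ n →
      powerSum Q n 15 =
        -8 * (n : ℂ) * ((n : ℂ) ^ 2 - 1) * ((n : ℂ) + 2) * (91 * (n : ℂ) ^ 8 + 364 * (n : ℂ) ^ 7 - 3468 * (n : ℂ) ^ 6 - 11678 * (n : ℂ) ^ 5 + 57138 * (n : ℂ) ^ 4 + 134164 * (n : ℂ) ^ 3 - 454161 * (n : ℂ) ^ 2 - 523250 * (n : ℂ) + 1401400) := by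
  intro n _
  have hs := powerSumRecurrence (fun n => (Q n).map (algebraMap ℚ ℂ)) (by simp [hQ0]) (by simp [hQ1])
    (fun n => by
      have := congrArg (Polynomial.map (algebraMap ℚ ℂ)) (hQrec n)
      simpa [Polynomial.derivative_map] using this)
  have h := hs.fifteen n
  rwa [powerSumSeries, PowerSeries.coeff_mk] at h
end

section
/- For every integer n ≥ 0, the coefficient A_{n,3} of the Yablonskii–Vorob'ev polynomial Q_n equals A_{n,3} = (1/6) n (n² − 1)(n + 2). -/
/-!
Write `d = n(n+1)/2` and reverse coefficients: `w ^ d * Q n (1/w)` is a polynomial in `w` whose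
coefficient at `w ^ k` is `A_{n,k}`. The Hirota expression `q q'' - q' ^ 2` of a monic `q` of degree
`e` has degree at most `2 e - 2`, with coefficient `e (e - 1) - e ^ 2 = -e` there, whereas
`X * q ^ 2` has degree `2 e + 1`. So, in reversed form, the recurrence reads
`R_{n+1} R_{n-1} = R_n ^ 2 + 4 e w ^ 3 + O(w ^ 4)` with `e = n(n+1)/2`. By induction
`R_n = 1 + c_n w ^ 3 + O(w ^ 4)`, where `c_{n+1} + c_{n-1} = 2 c_n + 2 n (n + 1)` (`Expansion.step`).
The polynomial `n (n² - 1) (n + 2) / 6` is the solution with `c_0 = c_1 = 0`.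
-/

open Polynomial

/-- `A_{n,k}`, the coefficient of `z^(n(n+1)/2 - k)` in `Q n`
(equal to `0` for `k > n(n+1)/2`). -/
def coeffA (Q : ℕ → Polynomial ℚ) (n k : ℕ) : ℚ :=
  if k ≤ n * (n + 1) / 2 then (Q n).coeff (n * (n + 1) / 2 - k) else 0

/-- `p = X ^ d + c X ^ (d - 3) + (terms of degree < d - 3)`, expressed through the reversed
polynomial `X ^ d * p (1 / X) = 1 + c X ^ 3 + O(X ^ 4)` so that it also makes sense for `d < 3`
(where it forces `c = 0`). -/
structure Expansion (d : ℕ) (c : ℚ) (p : ℚ[X]) : Prop where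
  natDegree_le : p.natDegree ≤ d
  coeff_zero : (reflect d p).coeff 0 = 1
  coeff_one : (reflect d p).coeff 1 = 0
  coeff_two : (reflect d p).coeff 2 = 0
  coeff_three : (reflect d p).coeff 3 = c

/-- The Hirota expression `q q'' - q' ^ 2` occurring in the recurrence. -/
noncomputable def hirota (q : ℚ[X]) : ℚ[X] :=
  q * derivative (derivative q) - derivative q ^ 2

/-- Written with the degree-preserving operator `θ = X d/dX`, the Hirota expression needs no
truncated subtraction in degree estimates. -/
lemma X_sq_mul_hirota (q : ℚ[X]) :
    hirota q * X ^ 2 =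
      q * (X * derivative (X * derivative q) - X * derivative q) - (X * derivative q) ^ 2 := by
  simp only [hirota, derivative_mul, derivative_X]
  ring

lemma natDegree_theta_le {q : ℚ[X]} {d : ℕ} (h : q.natDegree ≤ d) :
    (X * derivative q).natDegree ≤ d := by
  rw [natDegree_le_iff_coeff_eq_zero] at h ⊢
  rintro (_ | N) hN
  · simp
  · rw [coeff_X_mul, coeff_derivative, h _ hN, zero_mul]

lemma coeff_theta (q : ℚ[X]) (k : ℕ) : (X * derivative q).coeff k = k * q.coeff k := by
  cases k with
  | zero => simp
  | succ k => rw [coeff_X_mul, coeff_derivative]; push_cast; ring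

lemma natDegree_X_sq_mul_hirota_le {q : ℚ[X]} {d : ℕ} (h : q.natDegree ≤ d) :
    (hirota q * X ^ 2).natDegree ≤ d + d := by
  rw [X_sq_mul_hirota, sq]
  have h1 := natDegree_theta_le h
  have h2 := natDegree_theta_le h1
  exact natDegree_sub_le_of_le
    (natDegree_mul_le_of_le h ((natDegree_sub_le_of_le h2 h1).trans (max_self d).le))
    (natDegree_mul_le_of_le h1 h1) |>.trans (max_self _).le

lemma coeff_X_sq_mul_hirota {q : ℚ[X]} {d : ℕ} (h : q.natDegree ≤ d) :
    (hirota q * X ^ 2).coeff (d + d) = -d * q.coeff d ^ 2 := by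
  have h1 := natDegree_theta_le h
  have h2 := natDegree_theta_le h1
  have h3 : (X * derivative (X * derivative q) - X * derivative q).natDegree ≤ d :=
    (natDegree_sub_le_of_le h2 h1).trans (max_self d).le
  rw [X_sq_mul_hirota, sq, coeff_sub, coeff_mul_add_eq_of_natDegree_le h h3,
    coeff_mul_add_eq_of_natDegree_le h1 h1, coeff_sub]
  simp only [coeff_theta]
  ring

lemma coeff_reflect_of_le (p : ℚ[X]) {N k : ℕ} (h : k ≤ N) :
    (reflect N p).coeff k = p.coeff (N - k) := by
  rw [coeff_reflect, revAt_le h]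

/-- One step of the recurrence, on the level of leading coefficients. -/
lemma Expansion.step {p q s : ℚ[X]} {a b e : ℕ} {c c' : ℚ} (hb : 1 ≤ b) (hd : e + a = 2 * b + 1)
    (hp : Expansion a c p) (hq : Expansion b c' q) (h : s * p = X * q ^ 2 - 4 * hirota q) :
    Expansion e (2 * c' + 4 * b - c) s := by
  obtain ⟨hpd, p0, p1, p2, p3⟩ := hp
  obtain ⟨hqd, q0, q1, q2, q3⟩ := hq
  have hpa : p.coeff a = 1 := by simpa [coeff_reflect_of_le] using p0
  have hqb : q.coeff b = 1 := by simpa [coeff_reflect_of_le] using q0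
  have hH (k : ℕ) (hk : 2 * b < k + 2) : (hirota q).coeff k = 0 := by
    rw [← coeff_mul_X_pow _ 2]
    exact coeff_eq_zero_of_natDegree_lt
      ((natDegree_X_sq_mul_hirota_le hqd).trans_lt (by omega))
  have hHd : (hirota q).natDegree ≤ 2 * b + 1 :=
    natDegree_le_iff_coeff_eq_zero.2 fun N hN => hH N (by omega)
  have hXq : (X * q ^ 2).natDegree ≤ 1 + (b + b) := by
    rw [sq]
    exact natDegree_mul_le_of_le natDegree_X_le (natDegree_mul_le_of_le hqd hqd)
  have hsd : s.natDegree ≤ e := by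
    rcases eq_or_ne s 0 with rfl | hs
    · simp
    have hp0 : p ≠ 0 := by rintro rfl; simp at hpa
    have hpn : p.natDegree = a := natDegree_eq_of_le_of_coeff_ne_zero hpd (by simp [hpa])
    have h1 : (s * p).natDegree ≤ 2 * b + 1 := by
      rw [h]
      refine (natDegree_sub_le_of_le hXq ?_).trans (by omega : max _ (2 * b + 1) ≤ _)
      exact (natDegree_C_mul_le (4 : ℚ) _).trans hHd
    rw [natDegree_mul hs hp0] at h1
    omega
  have hXr : reflect (2 * b + 1) (X * q ^ 2) = reflect b q * reflect b q := by
    rw [show 2 * b + 1 = 1 + (b + b) by ring, sq,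
      reflect_mul _ _ natDegree_X_le (natDegree_mul_le_of_le hqd hqd), reflect_mul _ _ hqd hqd,
      reflect_one_X, one_mul]
  have key (k : ℕ) (hk : k ≤ 3) : (reflect e s * reflect a p).coeff k =
      (reflect b q * reflect b q).coeff k - 4 * (hirota q).coeff (2 * b + 1 - k) := by
    rw [← reflect_mul _ _ hsd hpd, hd, h, reflect_sub, hXr, coeff_sub,
      show (4 : ℚ[X]) = C 4 from rfl, reflect_C_mul, coeff_C_mul, coeff_reflect_of_le _ (by omega)]
  have hH3 : (hirota q).coeff (2 * b + 1 - 3) = -b := by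
    rw [← coeff_mul_X_pow _ 2, show 2 * b + 1 - 3 + 2 = b + b by omega,
      coeff_X_sq_mul_hirota hqd, hqb]
    ring
  have k0 := key 0 (by omega)
  have k1 := key 1 (by omega)
  have k2 := key 2 (by omega)
  have k3 := key 3 (by omega)
  rw [hH _ (by omega)] at k0 k1 k2
  rw [hH3] at k3
  simp only [coeff_mul, Finset.Nat.sum_antidiagonal_eq_sum_range_succ_mk, Finset.sum_range_succ,
    Finset.sum_range_zero, zero_add, Nat.succ_eq_add_one, Nat.reduceAdd, Nat.reduceSub,
    p0, p1, p2, p3, q0, q1, q2, q3] at k0 k1 k2 k3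
  have s0 : (reflect e s).coeff 0 = 1 := by linarith
  have s1 : (reflect e s).coeff 1 = 0 := by rw [s0] at k1; linarith
  have s2 : (reflect e s).coeff 2 = 0 := by rw [s0, s1] at k2; linarith
  exact ⟨hsd, s0, s1, s2, by rw [s0, s1, s2] at k3; linarith⟩

lemma Expansion.coeffA_three_eq {Q : ℕ → ℚ[X]} {n : ℕ} {c : ℚ}
    (h : Expansion (n * (n + 1) / 2) c (Q n)) : coeffA Q n 3 = c := by
  rw [← h.coeff_three, coeffA]
  split_ifs with hk
  · rw [coeff_reflect_of_le _ hk]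
  · -- beyond the degree, `reflect` leaves coefficients in place, and they vanish
    push Not at hk
    rw [coeff_reflect, revAt_eq_self_of_lt hk,
      coeff_eq_zero_of_natDegree_lt (h.natDegree_le.trans_lt hk)]

/-- Explicit formula for the coefficient `A_{n,3}` of the Yablonskii–Vorob'ev
polynomial `Q n`. -/
theorem coeffA_three
    (Q : ℕ → Polynomial ℚ)
    (hQ0 : Q 0 = 1) (hQ1 : Q 1 = X)
    (hQrec : ∀ n : ℕ, Q (n + 2) * Q n =
      X * (Q (n + 1)) ^ 2 -
        4 * (Q (n + 1) * derivative (derivative (Q (n + 1))) -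
              (derivative (Q (n + 1))) ^ 2)) :
    ∀ n : ℕ,
      coeffA Q n 3 =
        (1 / 6) * (n : ℚ) * ((n : ℚ) ^ 2 - 1) * ((n : ℚ) + 2) := by
  have tri (n : ℕ) : (n + 1) * (n + 1 + 1) / 2 = n * (n + 1) / 2 + (n + 1) := by
    rw [show (n + 1) * (n + 1 + 1) = n * (n + 1) + (n + 1) * 2 by ring,
      Nat.add_mul_div_right _ _ two_pos]
  have triQ (n : ℕ) : ((n * (n + 1) / 2 : ℕ) : ℚ) = n * (n + 1) / 2 := by
    rw [Nat.cast_div (Nat.even_mul_succ_self n).two_dvd two_ne_zero]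
    push_cast
    ring
  have main (n : ℕ) : Expansion (n * (n + 1) / 2)
      ((1 / 6) * (n : ℚ) * ((n : ℚ) ^ 2 - 1) * ((n : ℚ) + 2)) (Q n) := by
    induction n using Nat.twoStepInduction with
    | zero =>
      rw [hQ0]
      constructor <;> simp [coeff_one]
    | one =>
      rw [hQ1]
      constructor <;> simp [coeff_one]
    | more n ih0 ih1 =>
      have t0 := tri n
      have t1 : (n + 2) * (n + 2 + 1) / 2 = (n + 1) * (n + 1 + 1) / 2 + (n + 2) := tri (n + 1)
      convert Expansion.step (e := (n + 2) * (n + 2 + 1) / 2) (by omega) (by omega) ih0 ih1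
        (hQrec n) using 1
      rw [triQ]
      push_cast
      ring
  exact fun n => (main n).coeffA_three_eq
end
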